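/- arXiv:2303.10041 — 2 statements merged into one kernel-verified Lean document; each statement's English description precedes it below -/
import Mathlib

section
/- Fix α, β ≥ 0 with α + β > 0. The space 𝒞 is the direct sum 𝒞 = 𝒞_{α,β} ⊕ 𝒟_{α,β}: (i) 𝒞_{α,β} ∩ 𝒟_{α,β} = {(0,0)}; (ii) every (f₁,f₂) ∈ 𝒞 is the sum of an element of 𝒞_{α,β} and an element of 𝒟_{α,β}; moreover (iii) P_{α,β}(f₁,f₂) = (f₁,f₂) for every (f₁,f₂) ∈ 𝒞_{α,β} and P_{α,β}(f₁,f₂) = (0,0) for every (f₁,f₂) ∈ 𝒟_{α,β}, so that P_{α,β} is a projection of 𝒞 onto 𝒞_{α,β} along 𝒟_{α,β} and I − P_{α,β} is a projection onto 𝒟_{α,β}. -/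
/-!
For `ψ ∈ 𝒞_{α,β}` the odd parts are `α w` and `β w`, and the convolution equation for `w` says exactly
`w' = -k₂`, `w 0 = 0`. For `g ∈ 𝒟_{α,β}` the even parts are `-v` and `v`, and the convolution
equation for `v` says exactly `v' = k₁`. Hence decomposing `(f₁, f₂)` as an element of `𝒞_{α,β}`
plus an element of `𝒟_{α,β}` amounts to solving, with `v` even and `w` odd,

  `v' = k₁ - (γ²/2) w`,  `w' = -k₂ - 2 v`,  `w 0 = 0`,

and then the component in `𝒞_{α,β}` is `(f₁ᵉ + v + α w, f₂ᵉ - v + β w)`.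

The combinations `q = v - (γ/2) w` and `p = v + (γ/2) w` diagonalise the system:
`q' = γ q + (k₁ + (γ/2) k₂)` and `p' = -γ p + (k₁ - (γ/2) k₂)`. A bounded `q` must start at
`q 0 = -c` (`init_value_of_bounded`), so a bounded solution `(v, w)` is unique and given by variation
of constants; rewriting exponentials as hyperbolic functions turns it into the formula for
`P_{α,β}` (`P_eq_of_solution`). With `v = 0`, resp. `w = 0`, this shows that `P_{α,β}` is the
identity on `𝒞_{α,β}` and vanishes on `𝒟_{α,β}`, so the two spaces meet only in zero. For existence,
`q x = -∫₀^∞ e^{-γt} (k₁ + (γ/2) k₂)(x + t) dt` solves its equation and has limits at `±∞` by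
dominated convergence, and `p x = q (-x)`.
-/

open Filter Topology MeasureTheory Set intervalIntegral

noncomputable section

/-- `f` belongs to `C[-infty,infty]`: continuous with finite limits at both infinities. -/
def Cinf (f : ℝ → ℝ) : Prop :=
  Continuous f ∧ (∃ L, Tendsto f atTop (nhds L)) ∧ (∃ L, Tendsto f atBot (nhds L))

/-- odd part of a function -/
def oddPart (f : ℝ → ℝ) : ℝ → ℝ := fun x => (f x - f (-x)) / 2

/-- even part of a function -/
def evenPart (f : ℝ → ℝ) : ℝ → ℝ := fun x => (f x + f (-x)) / 2

/-- the exponential function `e_a(x) = exp(-a x)` -/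
def expa (a : ℝ) : ℝ → ℝ := fun x => Real.exp (-(a * x))

/-- the (signed) convolution `(f*g)(x) = ∫_0^x f(x-y) g(y) dy`, for all real `x` -/
def conv (f g : ℝ → ℝ) : ℝ → ℝ := fun x => ∫ y in (0:ℝ)..x, f (x - y) * g y

/-- the basic cosine family `C(t)f(x) = (f(x+t)+f(x-t))/2` -/
def cosF (t : ℝ) (f : ℝ → ℝ) : ℝ → ℝ := fun x => (f (x + t) + f (x - t)) / 2

/-- membership in the invariant subspace `𝒞_{α,β}` of `𝒞 = C[-∞,∞] × C[-∞,∞]` -/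
def memCab (α β : ℝ) (ψ₁ ψ₂ : ℝ → ℝ) : Prop :=
  Cinf ψ₁ ∧ Cinf ψ₂ ∧
  (∀ x, oddPart ψ₁ x = α * conv (expa (α + β)) (fun y => ψ₂ y - ψ₁ (-y)) x) ∧
  (∀ x, oddPart ψ₂ x = β * conv (expa (α + β)) (fun y => ψ₂ y - ψ₁ (-y)) x)

/-- membership in the complementary subspace `𝒟_{α,β}` of `𝒞` -/
def memDab (α β : ℝ) (g₁ g₂ : ℝ → ℝ) : Prop :=
  Cinf g₁ ∧ Cinf g₂ ∧
  (∀ x, evenPart g₁ x =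
    -(g₂ 0) * expa (α + β) x - conv (expa (α + β)) (fun y => β * g₂ y - α * g₁ (-y)) x) ∧
  (∀ x, evenPart g₂ x =
    g₂ 0 * expa (α + β) x + conv (expa (α + β)) (fun y => β * g₂ y - α * g₁ (-y)) x)

/-- `γ = sqrt(2(α²+β²))` -/
def gam (α β : ℝ) : ℝ := Real.sqrt (2 * (α ^ 2 + β ^ 2))

/-- `k₁ = α f₁ᵒ + β f₂ᵒ` -/
def kone (α β : ℝ) (f₁ f₂ : ℝ → ℝ) : ℝ → ℝ := fun x => α * oddPart f₁ x + β * oddPart f₂ x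

/-- `k₂ = f₁ᵉ - f₂ᵉ` -/
def ktwo (f₁ f₂ : ℝ → ℝ) : ℝ → ℝ := fun x => evenPart f₁ x - evenPart f₂ x

/-- the constant `c = ∫_0^∞ e^{-γx}(k₁(x) + (γ/2) k₂(x)) dx` -/
def cconst (α β : ℝ) (f₁ f₂ : ℝ → ℝ) : ℝ :=
  ∫ x in Ioi (0:ℝ), Real.exp (-(gam α β * x)) * (kone α β f₁ f₂ x + (gam α β / 2) * ktwo f₁ f₂ x)

/-- first coordinate `g₁` of `P_{α,β}(f₁,f₂)` -/
def Pone (α β : ℝ) (f₁ f₂ : ℝ → ℝ) : ℝ → ℝ := fun x =>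
  evenPart f₁ x +
    cconst α β f₁ f₂ * ((2 * α / gam α β) * Real.sinh (gam α β * x) - Real.cosh (gam α β * x)) -
    conv (fun y => (2 * α / gam α β) * kone α β f₁ f₂ y - (gam α β / 2) * ktwo f₁ f₂ y)
      (fun y => Real.sinh (gam α β * y)) x +
    conv (fun y => kone α β f₁ f₂ y - α * ktwo f₁ f₂ y) (fun y => Real.cosh (gam α β * y)) x

/-- second coordinate `g₂` of `P_{α,β}(f₁,f₂)` -/
def Ptwo (α β : ℝ) (f₁ f₂ : ℝ → ℝ) : ℝ → ℝ := fun x =>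
  evenPart f₂ x +
    cconst α β f₁ f₂ * ((2 * β / gam α β) * Real.sinh (gam α β * x) + Real.cosh (gam α β * x)) -
    conv (fun y => (2 * β / gam α β) * kone α β f₁ f₂ y + (gam α β / 2) * ktwo f₁ f₂ y)
      (fun y => Real.sinh (gam α β * y)) x -
    conv (fun y => kone α β f₁ f₂ y + β * ktwo f₁ f₂ y) (fun y => Real.cosh (gam α β * y)) x

/-! ### The space `C[-∞,∞]` -/

lemma Cinf.add {f g : ℝ → ℝ} (hf : Cinf f) (hg : Cinf g) : Cinf (fun x => f x + g x) := by
  obtain ⟨cf, ⟨a, ha⟩, ⟨b, hb⟩⟩ := hf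
  obtain ⟨cg, ⟨a', ha'⟩, ⟨b', hb'⟩⟩ := hg
  exact ⟨cf.add cg, ⟨_, ha.add ha'⟩, ⟨_, hb.add hb'⟩⟩

lemma Cinf.const_mul {f : ℝ → ℝ} (hf : Cinf f) (r : ℝ) : Cinf (fun x => r * f x) := by
  obtain ⟨cf, ⟨a, ha⟩, ⟨b, hb⟩⟩ := hf
  exact ⟨continuous_const.mul cf, ⟨_, ha.const_mul r⟩, ⟨_, hb.const_mul r⟩⟩

lemma Cinf.comp_neg {f : ℝ → ℝ} (hf : Cinf f) : Cinf (fun x => f (-x)) := by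
  obtain ⟨cf, ⟨a, ha⟩, ⟨b, hb⟩⟩ := hf
  exact ⟨cf.comp continuous_neg, ⟨_, hb.comp tendsto_neg_atTop_atBot⟩,
    ⟨_, ha.comp tendsto_neg_atBot_atTop⟩⟩

lemma Cinf.sub {f g : ℝ → ℝ} (hf : Cinf f) (hg : Cinf g) : Cinf (fun x => f x - g x) := by
  have h := hf.add (hg.const_mul (-1))
  have e : (fun x => f x - g x) = fun x => f x + -1 * g x := by funext x; ring
  rw [e]; exact h

lemma Cinf.oddPart {f : ℝ → ℝ} (hf : Cinf f) : Cinf (oddPart f) := by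
  have h := (hf.sub hf.comp_neg).const_mul (1 / 2)
  have e : _root_.oddPart f = fun x => 1 / 2 * (f x - f (-x)) := by
    funext x; simp only [_root_.oddPart]; ring
  rw [e]; exact h

lemma Cinf.evenPart {f : ℝ → ℝ} (hf : Cinf f) : Cinf (evenPart f) := by
  have h := (hf.add hf.comp_neg).const_mul (1 / 2)
  have e : _root_.evenPart f = fun x => 1 / 2 * (f x + f (-x)) := by
    funext x; simp only [_root_.evenPart]; ring
  rw [e]; exact h

lemma Cinf.kone {f₁ f₂ : ℝ → ℝ} (α β : ℝ) (h₁ : Cinf f₁) (h₂ : Cinf f₂) :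
    Cinf (kone α β f₁ f₂) :=
  (h₁.oddPart.const_mul α).add (h₂.oddPart.const_mul β)

lemma Cinf.ktwo {f₁ f₂ : ℝ → ℝ} (h₁ : Cinf f₁) (h₂ : Cinf f₂) : Cinf (ktwo f₁ f₂) :=
  h₁.evenPart.sub h₂.evenPart

lemma Cinf.bounded {f : ℝ → ℝ} (hf : Cinf f) : ∃ M, ∀ x, |f x| ≤ M := by
  obtain ⟨cf, ⟨a, ha⟩, ⟨b, hb⟩⟩ := hf
  have h1 : ∀ᶠ x in atTop, |f x| < |a| + 1 := ha.abs.eventually_lt_const (by linarith)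
  have h2 : ∀ᶠ x in atBot, |f x| < |b| + 1 := hb.abs.eventually_lt_const (by linarith)
  obtain ⟨A, hA⟩ := eventually_atTop.1 h1
  obtain ⟨B, hB⟩ := eventually_atBot.1 h2
  obtain ⟨C, hC⟩ := (isCompact_Icc (a := B) (b := A)).exists_bound_of_continuousOn cf.continuousOn
  refine ⟨max (max (|a| + 1) (|b| + 1)) C, fun x => ?_⟩
  by_cases hxA : A ≤ x
  · exact (hA x hxA).le.trans ((le_max_left _ _).trans (le_max_left _ _))
  by_cases hxB : x ≤ B
  · exact (hB x hxB).le.trans ((le_max_right _ _).trans (le_max_left _ _))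
  · exact (hC x ⟨(not_le.1 hxB).le, (not_le.1 hxA).le⟩).trans (le_max_right _ _)

/-! ### Convolution with exponentials and linear equations of first order -/

lemma conv_comm (f g : ℝ → ℝ) (x : ℝ) : conv f g x = conv g f x := by
  have h := intervalIntegral.integral_comp_sub_left (a := 0) (b := x)
    (fun y => f (x - y) * g y) x
  simp only [sub_self, sub_zero, sub_sub_cancel] at h
  simp only [conv]
  rw [← h]
  exact intervalIntegral.integral_congr fun y _ => mul_comm _ _

lemma conv_expa (s : ℝ) (G : ℝ → ℝ) (x : ℝ) :
    conv (expa s) G x = Real.exp (-(s * x)) * ∫ y in (0:ℝ)..x, Real.exp (s * y) * G y := by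
  simp only [conv, expa]
  rw [← intervalIntegral.integral_const_mul]
  refine intervalIntegral.integral_congr fun y _ => ?_
  rw [← mul_assoc, ← Real.exp_add]
  congr 2
  ring

lemma hasDerivAt_exp_mul (s x : ℝ) :
    HasDerivAt (fun y => Real.exp (s * y)) (s * Real.exp (s * x)) x := by
  have h := ((hasDerivAt_id x).const_mul s).exp
  simp only [id, mul_one] at h
  rw [mul_comm]; exact h

lemma hasDerivAt_conv_expa (s : ℝ) {G : ℝ → ℝ} (hG : Continuous G) (x : ℝ) :
    HasDerivAt (conv (expa s) G) (-s * conv (expa s) G x + G x) x := by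
  have e : conv (expa s) G =
      fun x => Real.exp (-s * x) * ∫ y in (0:ℝ)..x, Real.exp (s * y) * G y := by
    funext x; rw [conv_expa, neg_mul]
  have hc : Continuous fun y => Real.exp (s * y) * G y := by fun_prop
  have h := (hasDerivAt_exp_mul (-s) x).mul (hc.integral_hasStrictDerivAt 0 x).hasDerivAt
  rw [e]
  refine h.congr_deriv ?_
  have h1 : Real.exp (-s * x) * Real.exp (s * x) = 1 := by
    rw [← Real.exp_add]; simp
  linear_combination G x * h1

lemma conv_zero_right (f g : ℝ → ℝ) : conv f g 0 = 0 := by simp [conv]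

/-- Variation of constants: the solution of `w' = -s w + G` is `w(0) e_s + e_s * G`. -/
lemma eq_conv_of_hasDerivAt {s : ℝ} {w G : ℝ → ℝ} (hG : Continuous G)
    (hw : ∀ x, HasDerivAt w (-s * w x + G x) x) (x : ℝ) :
    w x = w 0 * expa s x + conv (expa s) G x := by
  have hd : ∀ y ∈ uIcc 0 x, HasDerivAt (fun y => Real.exp (s * y) * w y)
      (Real.exp (s * y) * G y) y := fun y _ => by
    refine ((hasDerivAt_exp_mul s y).mul (hw y)).congr_deriv ?_
    ring
  have hc : Continuous fun y => Real.exp (s * y) * G y := by fun_prop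
  have h := intervalIntegral.integral_eq_sub_of_hasDerivAt hd (hc.intervalIntegrable 0 x)
  rw [conv_expa, h, expa]
  have h1 : Real.exp (-(s * x)) * Real.exp (s * x) = 1 := by
    rw [← Real.exp_add]; simp
  simp only [mul_zero, Real.exp_zero]
  linear_combination (-w x) * h1

lemma conv_expa_comb (s a b : ℝ) {k l : ℝ → ℝ} (hk : Continuous k) (hl : Continuous l) (x : ℝ) :
    conv (expa s) (fun y => a * k y + b * l y) x =
      a * conv (expa s) k x + b * conv (expa s) l x := by
  have hk' : Continuous fun y => a * (expa s (x - y) * k y) := by unfold expa; fun_prop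
  have hl' : Continuous fun y => b * (expa s (x - y) * l y) := by unfold expa; fun_prop
  simp only [conv]
  rw [← intervalIntegral.integral_const_mul, ← intervalIntegral.integral_const_mul,
    ← intervalIntegral.integral_add (hk'.intervalIntegrable _ _) (hl'.intervalIntegrable _ _)]
  refine intervalIntegral.integral_congr fun y _ => ?_
  ring

lemma conv_sinh (g : ℝ) {k : ℝ → ℝ} (hk : Continuous k) (x : ℝ) :
    conv k (fun y => Real.sinh (g * y)) x =
      (conv (expa (-g)) k x - conv (expa g) k x) / 2 := by
  have h1 : Continuous fun y => expa (-g) (x - y) * k y := by unfold expa; fun_prop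
  have h2 : Continuous fun y => expa g (x - y) * k y := by unfold expa; fun_prop
  rw [conv_comm]
  simp only [conv]
  rw [← intervalIntegral.integral_sub (h1.intervalIntegrable _ _) (h2.intervalIntegrable _ _),
    ← intervalIntegral.integral_div]
  refine intervalIntegral.integral_congr fun y _ => ?_
  simp only [expa, Real.sinh_eq]
  ring_nf

lemma conv_cosh (g : ℝ) {k : ℝ → ℝ} (hk : Continuous k) (x : ℝ) :
    conv k (fun y => Real.cosh (g * y)) x =
      (conv (expa (-g)) k x + conv (expa g) k x) / 2 := by
  have h1 : Continuous fun y => expa (-g) (x - y) * k y := by unfold expa; fun_prop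
  have h2 : Continuous fun y => expa g (x - y) * k y := by unfold expa; fun_prop
  rw [conv_comm]
  simp only [conv]
  rw [← intervalIntegral.integral_add (h1.intervalIntegrable _ _) (h2.intervalIntegrable _ _),
    ← intervalIntegral.integral_div]
  refine intervalIntegral.integral_congr fun y _ => ?_
  simp only [expa, Real.cosh_eq]
  ring_nf

/-! ### Bounded solutions of `q' = g q + m` -/

lemma integrableOn_exp_mul_bounded {g : ℝ} (hg : 0 < g) {m : ℝ → ℝ} (hm : Continuous m)
    {M : ℝ} (hM : ∀ x, |m x| ≤ M) (a : ℝ) :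
    IntegrableOn (fun x => Real.exp (-(g * x)) * m x) (Ioi a) := by
  have h0 : IntegrableOn (fun x => Real.exp (-(g * x))) (Ioi a) := by
    simpa only [neg_mul] using exp_neg_integrableOn_Ioi a hg
  exact h0.mul_bdd (c := M) hm.aestronglyMeasurable (Eventually.of_forall hM)

lemma init_value_of_bounded {g : ℝ} (hg : 0 < g) {m q : ℝ → ℝ} (hm : Cinf m)
    (hq : ∀ x, HasDerivAt q (g * q x + m x) x) (hb : ∃ M, ∀ x, |q x| ≤ M) :
    ∫ x in Ioi (0:ℝ), Real.exp (-(g * x)) * m x = -q 0 := by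
  obtain ⟨M, hM⟩ := hm.bounded
  obtain ⟨K, hK⟩ := hb
  have hd : ∀ x ∈ Ici (0:ℝ), HasDerivAt (fun y => Real.exp (-g * y) * q y)
      (Real.exp (-(g * x)) * m x) x := fun x _ => by
    refine ((hasDerivAt_exp_mul (-g) x).mul (hq x)).congr_deriv ?_
    rw [neg_mul]; ring
  have hlim : Tendsto (fun y => Real.exp (-g * y) * q y) atTop (𝓝 0) := by
    have h0 : Tendsto (fun y => Real.exp (-g * y)) atTop (𝓝 0) :=
      Real.tendsto_exp_atBot.comp (tendsto_id.const_mul_atTop_of_neg (neg_neg_of_pos hg))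
    have h1 : Tendsto (fun y => Real.exp (-g * y) * K) atTop (𝓝 0) := by
      simpa using h0.mul_const K
    refine squeeze_zero_norm (fun y => ?_) h1
    rw [norm_mul, Real.norm_eq_abs, Real.norm_eq_abs, Real.abs_exp]
    exact mul_le_mul_of_nonneg_left (hK y) (Real.exp_pos _).le
  have h := integral_Ioi_of_hasDerivAt_of_tendsto' hd
    (integrableOn_exp_mul_bounded hg hm.1 hM 0) hlim
  simpa using h

/-- The bounded solution `q x = -∫₀^∞ e^{-gt} m(x + t) dt` of `q' = g q + m`. -/
def boundedSol (g : ℝ) (m : ℝ → ℝ) : ℝ → ℝ := fun x =>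
  -∫ t in Ioi (0:ℝ), Real.exp (-(g * t)) * m (x + t)

lemma boundedSol_eq {g : ℝ} (hg : 0 < g) {m : ℝ → ℝ} (hm : Cinf m) (x : ℝ) :
    boundedSol g m x = boundedSol g m 0 * expa (-g) x + conv (expa (-g)) m x := by
  obtain ⟨M, hM⟩ := hm.bounded
  have hshift : ∫ t in Ioi (0:ℝ), Real.exp (-(g * (x + t))) * m (x + t) =
      ∫ y in Ioi x, Real.exp (-(g * y)) * m y := by
    have h := (measurePreserving_add_left volume x).setIntegral_preimage_emb
      (measurableEmbedding_addLeft x) (fun y => Real.exp (-(g * y)) * m y) (Ioi x)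
    rw [← h]
    congr 2
    ext t; simp
  have hsub := intervalIntegral.integral_Ioi_sub_Ioi'
    (integrableOn_exp_mul_bounded hg hm.1 hM 0) (integrableOn_exp_mul_bounded hg hm.1 hM x)
  have hfac : ∫ t in Ioi (0:ℝ), Real.exp (-(g * t)) * m (x + t) =
      Real.exp (g * x) * ∫ t in Ioi (0:ℝ), Real.exp (-(g * (x + t))) * m (x + t) := by
    rw [← MeasureTheory.integral_const_mul]
    congr 1
    funext t
    rw [← mul_assoc, ← Real.exp_add]
    congr 2
    ring
  rw [conv_expa]
  simp only [boundedSol, expa, zero_add, neg_mul, neg_neg]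
  rw [hfac, hshift, ← hsub]
  ring

lemma hasDerivAt_boundedSol {g : ℝ} (hg : 0 < g) {m : ℝ → ℝ} (hm : Cinf m) (x : ℝ) :
    HasDerivAt (boundedSol g m) (g * boundedSol g m x + m x) x := by
  have e : boundedSol g m =
      fun x => boundedSol g m 0 * Real.exp (g * x) + conv (expa (-g)) m x := by
    funext y
    rw [boundedSol_eq hg hm y]
    simp [expa]
  have h := ((hasDerivAt_exp_mul g x).const_mul (boundedSol g m 0)).add
    (hasDerivAt_conv_expa (-g) hm.1 x)
  have h2 := h.congr_of_eventuallyEq (Eventually.of_forall fun y => congrFun e y)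
  refine h2.congr_deriv ?_
  linear_combination -g * congrFun e x

lemma tendsto_boundedSol {g : ℝ} (hg : 0 < g) {m : ℝ → ℝ} (hm : Cinf m) {l : Filter ℝ}
    [l.IsCountablyGenerated] {L : ℝ} (hL : ∀ t, Tendsto (fun x => m (x + t)) l (𝓝 L)) :
    Tendsto (boundedSol g m) l (𝓝 (-∫ t in Ioi (0:ℝ), Real.exp (-(g * t)) * L)) := by
  obtain ⟨M, hM⟩ := hm.bounded
  have hmc := hm.1
  refine Tendsto.neg ?_
  refine tendsto_integral_filter_of_dominated_convergence (fun t => Real.exp (-(g * t)) * M)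
    ?_ ?_ ?_ ?_
  · refine Eventually.of_forall fun x => Continuous.aestronglyMeasurable ?_
    fun_prop
  · refine Eventually.of_forall fun x => Eventually.of_forall fun t => ?_
    rw [norm_mul, Real.norm_eq_abs, Real.norm_eq_abs, Real.abs_exp]
    exact mul_le_mul_of_nonneg_left (hM _) (Real.exp_pos _).le
  · exact integrableOn_exp_mul_bounded hg continuous_const (M := |M|) (fun _ => le_rfl) 0
  · exact Eventually.of_forall fun t => (hL t).const_mul _

lemma cinf_boundedSol {g : ℝ} (hg : 0 < g) {m : ℝ → ℝ} (hm : Cinf m) :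
    Cinf (boundedSol g m) := by
  obtain ⟨cm, ⟨a, ha⟩, ⟨b, hb⟩⟩ := id hm
  refine ⟨continuous_iff_continuousAt.2 fun x => (hasDerivAt_boundedSol hg hm x).continuousAt,
    ⟨_, tendsto_boundedSol hg hm fun t => ha.comp (tendsto_atTop_add_const_right _ t tendsto_id)⟩,
    ⟨_, tendsto_boundedSol hg hm fun t => hb.comp (tendsto_atBot_add_const_right _ t tendsto_id)⟩⟩

/-! ### The system for `(v, w)` and the operator `P` -/

lemma gam_pos {α β : ℝ} (hα : 0 ≤ α) (hαβ : 0 < α + β) : 0 < gam α β := by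
  refine Real.sqrt_pos.2 ?_
  rcases hα.eq_or_lt with h | h
  · have : 0 < β := by linarith
    positivity
  · positivity

lemma gam_sq (α β : ℝ) : gam α β ^ 2 = 2 * (α ^ 2 + β ^ 2) :=
  Real.sq_sqrt (by positivity)

/-- Any bounded solution `(v, w)` of `v' = k₁ - (γ²/2) w`, `w' = -k₂ - 2 v`, `w 0 = 0` computes
`P_{α,β}`; only boundedness of `v - (γ/2) w` matters. -/
lemma P_eq_of_solution {α β : ℝ} (hg : 0 < gam α β) {f₁ f₂ v w : ℝ → ℝ}
    (hf₁ : Cinf f₁) (hf₂ : Cinf f₂)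
    (hv : ∀ x, HasDerivAt v (kone α β f₁ f₂ x - gam α β ^ 2 / 2 * w x) x)
    (hw : ∀ x, HasDerivAt w (-ktwo f₁ f₂ x - 2 * v x) x) (hw0 : w 0 = 0)
    (hb : ∃ M, ∀ x, |v x - gam α β / 2 * w x| ≤ M) :
    (∀ x, Pone α β f₁ f₂ x = evenPart f₁ x + v x + α * w x) ∧
    (∀ x, Ptwo α β f₁ f₂ x = evenPart f₂ x - v x + β * w x) := by
  have hk1 := Cinf.kone α β hf₁ hf₂
  have hk2 := Cinf.ktwo hf₁ hf₂
  set g := gam α β with hgdef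
  set k := kone α β f₁ f₂ with hk
  set l := ktwo f₁ f₂ with hl
  have hq : ∀ x, HasDerivAt (fun x => v x - g / 2 * w x)
      (g * (v x - g / 2 * w x) + (1 * k x + g / 2 * l x)) x := fun x => by
    refine ((hv x).sub ((hw x).const_mul (g / 2))).congr_deriv ?_
    ring
  have hp : ∀ x, HasDerivAt (fun x => v x + g / 2 * w x)
      (-g * (v x + g / 2 * w x) + (1 * k x + -(g / 2) * l x)) x := fun x => by
    refine ((hv x).add ((hw x).const_mul (g / 2))).congr_deriv ?_
    ring
  have hmp : Cinf (fun x => 1 * k x + g / 2 * l x) := (hk1.const_mul _).add (hk2.const_mul _)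
  have hmm : Cinf (fun x => 1 * k x + -(g / 2) * l x) := (hk1.const_mul _).add (hk2.const_mul _)
  have hc : cconst α β f₁ f₂ = -v 0 := by
    have h := init_value_of_bounded hg hmp hq hb
    simp only [hw0, mul_zero, sub_zero, one_mul] at h
    exact h
  have hQ := fun x => eq_conv_of_hasDerivAt (s := -g) (w := fun x => v x - g / 2 * w x)
    hmp.1 (fun x => by rw [neg_neg]; exact hq x) x
  have hP := fun x => eq_conv_of_hasDerivAt (s := g) (w := fun x => v x + g / 2 * w x)
    hmm.1 hp x
  simp only [hw0, mul_zero, sub_zero, add_zero] at hQ hP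
  have hg' := hg.ne'
  have ck := hk1.1
  have cl := hk2.1
  have e1 : ∀ x, Real.sinh (g * x) = (expa (-g) x - expa g x) / 2 := fun x => by
    simp [expa, Real.sinh_eq]
  have e2 : ∀ x, Real.cosh (g * x) = (expa (-g) x + expa g x) / 2 := fun x => by
    simp [expa, Real.cosh_eq]
  -- `v` and `w` recovered from `q` and `p`
  have hV : ∀ x, v x = ((v 0 * expa (-g) x + conv (expa (-g)) (fun x => 1 * k x + g / 2 * l x) x) +
      (v 0 * expa g x + conv (expa g) (fun x => 1 * k x + -(g / 2) * l x) x)) / 2 := fun x => by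
    rw [← hQ, ← hP]; ring
  have hW : ∀ x, w x = ((v 0 * expa g x + conv (expa g) (fun x => 1 * k x + -(g / 2) * l x) x) -
      (v 0 * expa (-g) x + conv (expa (-g)) (fun x => 1 * k x + g / 2 * l x) x)) / g := fun x => by
    rw [← hQ, ← hP]; field_simp; ring
  constructor
  · intro x
    have a1 : (fun y => 2 * α / g * k y - g / 2 * l y) =
        fun y => 2 * α / g * k y + -(g / 2) * l y := by funext y; ring
    have a2 : (fun y => k y - α * l y) = fun y => 1 * k y + -α * l y := by funext y; ring
    simp only [Pone, ← hgdef, ← hk, ← hl]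
    rw [hV x, hW x, hc, a1, a2, conv_sinh g (by fun_prop), conv_cosh g (by fun_prop),
      e1, e2]
    simp only [conv_expa_comb _ _ _ ck cl]
    field_simp
    ring
  · intro x
    have a1 : (fun y => k y + β * l y) = fun y => 1 * k y + β * l y := by funext y; ring
    simp only [Ptwo, ← hgdef, ← hk, ← hl]
    rw [hV x, hW x, hc, a1, conv_sinh g (by fun_prop), conv_cosh g (by fun_prop),
      e1, e2]
    simp only [conv_expa_comb _ _ _ ck cl]
    field_simp
    ring

lemma eq_even_add_odd (f : ℝ → ℝ) (x : ℝ) : f x = evenPart f x + oddPart f x := by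
  simp only [evenPart, oddPart]; ring

lemma neg_eq_even_sub_odd (f : ℝ → ℝ) (x : ℝ) : f (-x) = evenPart f x - oddPart f x := by
  simp only [evenPart, oddPart]; ring

lemma P_on_Cab {α β : ℝ} (hg : 0 < gam α β) {f₁ f₂ : ℝ → ℝ} (h : memCab α β f₁ f₂) :
    Pone α β f₁ f₂ = f₁ ∧ Ptwo α β f₁ f₂ = f₂ := by
  obtain ⟨h₁, h₂, o₁, o₂⟩ := h
  set w := conv (expa (α + β)) (fun y => f₂ y - f₁ (-y)) with hwdef
  have hG : Continuous fun y => f₂ y - f₁ (-y) := (h₂.sub h₁.comp_neg).1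
  have hk : ∀ x, kone α β f₁ f₂ x = gam α β ^ 2 / 2 * w x := fun x => by
    rw [gam_sq, kone, o₁, o₂]; ring
  have hw : ∀ x, HasDerivAt w (-ktwo f₁ f₂ x - 2 * 0) x := fun x => by
    refine (hasDerivAt_conv_expa (α + β) hG x).congr_deriv ?_
    rw [← hwdef, eq_even_add_odd f₂, neg_eq_even_sub_odd f₁, o₁, o₂, ktwo]
    ring
  have hb : ∃ M, ∀ x, |0 - gam α β / 2 * w x| ≤ M := by
    obtain ⟨M, hM⟩ := ((Cinf.kone α β h₁ h₂).const_mul (-(1 / gam α β))).bounded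
    refine ⟨M, fun x => ?_⟩
    have e : 0 - gam α β / 2 * w x = -(1 / gam α β) * kone α β f₁ f₂ x := by
      rw [hk]; field_simp; ring
    rw [e]; exact hM x
  obtain ⟨p₁, p₂⟩ := P_eq_of_solution hg h₁ h₂ (v := fun _ => 0) (w := w)
    (fun x => by rw [hk, sub_self]; exact hasDerivAt_const x 0) hw (conv_zero_right _ _) hb
  constructor
  · funext x; rw [p₁, eq_even_add_odd f₁ x, o₁]; ring
  · funext x; rw [p₂, eq_even_add_odd f₂ x, o₂]; ring

lemma P_on_Dab {α β : ℝ} (hg : 0 < gam α β) {f₁ f₂ : ℝ → ℝ} (h : memDab α β f₁ f₂) :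
    Pone α β f₁ f₂ = (fun _ => 0) ∧ Ptwo α β f₁ f₂ = (fun _ => 0) := by
  obtain ⟨h₁, h₂, e₁, e₂⟩ := h
  have hG : Continuous fun y => β * f₂ y - α * f₁ (-y) :=
    ((h₂.const_mul β).sub (h₁.comp_neg.const_mul α)).1
  have e12 : ∀ x, evenPart f₁ x = -evenPart f₂ x := fun x => by rw [e₁, e₂]; ring
  have hv : ∀ x, HasDerivAt (evenPart f₂) (kone α β f₁ f₂ x - gam α β ^ 2 / 2 * 0) x := fun x => by
    have e : evenPart f₂ = fun x => f₂ 0 * Real.exp (-(α + β) * x) +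
        conv (expa (α + β)) (fun y => β * f₂ y - α * f₁ (-y)) x := by
      funext y; rw [e₂, expa, neg_mul]
    have hd := ((hasDerivAt_exp_mul (-(α + β)) x).const_mul (f₂ 0)).add
      (hasDerivAt_conv_expa (α + β) hG x)
    have hd' := hd.congr_of_eventuallyEq (Eventually.of_forall fun y => congrFun e y)
    refine hd'.congr_deriv ?_
    have ex := congrFun e x
    simp only [kone]
    rw [eq_even_add_odd f₂ x, neg_eq_even_sub_odd f₁, e12]
    linear_combination (α + β) * ex
  obtain ⟨p₁, p₂⟩ := P_eq_of_solution hg h₁ h₂ (v := evenPart f₂) (w := fun _ => 0)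
    hv (fun x => (hasDerivAt_const x 0).congr_deriv (by rw [ktwo, e12]; ring)) rfl
    (by simpa using h₂.evenPart.bounded)
  constructor
  · funext x; rw [p₁, e12]; ring
  · funext x; rw [p₂]; ring

/-- Existence of an even `v` and an odd `w` in `C[-∞,∞]` solving the system. -/
lemma exists_solution {α β : ℝ} (hg : 0 < gam α β) {f₁ f₂ : ℝ → ℝ}
    (hf₁ : Cinf f₁) (hf₂ : Cinf f₂) :
    ∃ v w : ℝ → ℝ, Cinf v ∧ Cinf w ∧ (∀ x, v (-x) = v x) ∧ (∀ x, w (-x) = -w x) ∧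
      (∀ x, HasDerivAt v (kone α β f₁ f₂ x - gam α β ^ 2 / 2 * w x) x) ∧
      (∀ x, HasDerivAt w (-ktwo f₁ f₂ x - 2 * v x) x) := by
  have hk1 := Cinf.kone α β hf₁ hf₂
  have hk2 := Cinf.ktwo hf₁ hf₂
  have o1 : ∀ x, kone α β f₁ f₂ (-x) = -kone α β f₁ f₂ x := fun x => by
    simp only [kone, oddPart, neg_neg]; ring
  have o2 : ∀ x, ktwo f₁ f₂ (-x) = ktwo f₁ f₂ x := fun x => by
    simp only [ktwo, evenPart, neg_neg]; ring
  set g := gam α β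
  have hm : Cinf (fun x => kone α β f₁ f₂ x + g / 2 * ktwo f₁ f₂ x) :=
    hk1.add (hk2.const_mul _)
  set q := boundedSol g (fun x => kone α β f₁ f₂ x + g / 2 * ktwo f₁ f₂ x)
  have hqC : Cinf q := cinf_boundedSol hg hm
  have hq : ∀ x, HasDerivAt q (g * q x + (kone α β f₁ f₂ x + g / 2 * ktwo f₁ f₂ x)) x :=
    hasDerivAt_boundedSol hg hm
  have hp : ∀ x, HasDerivAt (fun y => q (-y))
      (-g * q (-x) + (kone α β f₁ f₂ x - g / 2 * ktwo f₁ f₂ x)) x := fun x => by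
    refine ((hq (-x)).comp x (hasDerivAt_neg x)).congr_deriv ?_
    rw [o1, o2]; ring
  have hg' := hg.ne'
  refine ⟨fun x => 1 / 2 * (q x + q (-x)), fun x => 1 / g * (q (-x) - q x),
    (hqC.add hqC.comp_neg).const_mul _, (hqC.comp_neg.sub hqC).const_mul _,
    fun x => by simp only [neg_neg]; ring, fun x => by simp only [neg_neg]; ring, fun x => ?_,
    fun x => ?_⟩
  · refine (((hq x).add (hp x)).const_mul (1 / 2)).congr_deriv ?_
    field_simp; ring
  · refine (((hp x).sub (hq x)).const_mul (1 / g)).congr_deriv ?_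
    field_simp; ring

lemma exists_decomposition {α β : ℝ} (hg : 0 < gam α β) {f₁ f₂ : ℝ → ℝ}
    (hf₁ : Cinf f₁) (hf₂ : Cinf f₂) :
    ∃ h₁ h₂ d₁ d₂ : ℝ → ℝ, memCab α β h₁ h₂ ∧ memDab α β d₁ d₂ ∧
      f₁ = (fun x => h₁ x + d₁ x) ∧ f₂ = (fun x => h₂ x + d₂ x) := by
  obtain ⟨v, w, hvC, hwC, hve, hwo, hv, hw⟩ := exists_solution hg hf₁ hf₂
  have hw0 : w 0 = 0 := by
    have h := hwo 0
    rw [neg_zero] at h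
    linarith
  have ee : ∀ (f : ℝ → ℝ) x, evenPart f (-x) = evenPart f x := fun f x => by
    simp only [evenPart, neg_neg]; ring
  have oo : ∀ (f : ℝ → ℝ) x, oddPart f (-x) = -oddPart f x := fun f x => by
    simp only [oddPart, neg_neg]; ring
  have o0 : ∀ f : ℝ → ℝ, oddPart f 0 = 0 := fun f => by simp [oddPart]
  have hh₁ : Cinf (fun x => evenPart f₁ x + v x + α * w x) :=
    (hf₁.evenPart.add hvC).add (hwC.const_mul α)
  have hh₂ : Cinf (fun x => evenPart f₂ x - v x + β * w x) :=
    (hf₂.evenPart.sub hvC).add (hwC.const_mul β)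
  have hd₁ : Cinf (fun x => oddPart f₁ x - v x - α * w x) :=
    (hf₁.oddPart.sub hvC).sub (hwC.const_mul α)
  have hd₂ : Cinf (fun x => oddPart f₂ x + v x - β * w x) :=
    (hf₂.oddPart.add hvC).sub (hwC.const_mul β)
  have hW := eq_conv_of_hasDerivAt (s := α + β) (w := w) (hh₂.sub hh₁.comp_neg).1 (fun x => by
    refine (hw x).congr_deriv ?_
    simp only [ee, hve, hwo, ktwo]
    ring)
  have hV := eq_conv_of_hasDerivAt (s := α + β) (w := v)
    ((hd₂.const_mul β).sub (hd₁.comp_neg.const_mul α)).1 (fun x => by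
    refine (hv x).congr_deriv ?_
    rw [gam_sq]
    simp only [oo, hve, hwo, kone]
    ring)
  simp only [hw0, zero_mul, zero_add] at hW
  refine ⟨_, _, _, _, ⟨hh₁, hh₂, fun x => ?_, fun x => ?_⟩, ⟨hd₁, hd₂, fun x => ?_, fun x => ?_⟩,
    ?_, ?_⟩
  · rw [← hW]
    rw [oddPart]; simp only [ee, hve, hwo]; ring
  · rw [← hW]
    rw [oddPart]; simp only [ee, hve, hwo]; ring
  · have e : evenPart (fun x => oddPart f₁ x - v x - α * w x) x = -v x := by
      rw [evenPart]; simp only [oo, hve, hwo]; ring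
    rw [e, hV x]
    simp only [o0, hw0]
    ring
  · have e : evenPart (fun x => oddPart f₂ x + v x - β * w x) x = v x := by
      rw [evenPart]; simp only [oo, hve, hwo]; ring
    rw [e, hV x]
    simp only [o0, hw0]
    ring
  · funext x; rw [eq_even_add_odd f₁ x]; ring
  · funext x; rw [eq_even_add_odd f₂ x]; ring

/-- `𝒞 = 𝒞_{α,β} ⊕ 𝒟_{α,β}`, with `P_{α,β}` the projection onto `𝒞_{α,β}`
along `𝒟_{α,β}`, and `I - P_{α,β}` the projection onto `𝒟_{α,β}`. -/
theorem statement8 (α β : ℝ) (hα : 0 ≤ α) (hβ : 0 ≤ β) (hαβ : 0 < α + β) :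
    (∀ g₁ g₂ : ℝ → ℝ, memCab α β g₁ g₂ → memDab α β g₁ g₂ →
      g₁ = (fun _ => 0) ∧ g₂ = (fun _ => 0)) ∧
    (∀ f₁ f₂ : ℝ → ℝ, Cinf f₁ → Cinf f₂ →
      ∃ h₁ h₂ d₁ d₂ : ℝ → ℝ, memCab α β h₁ h₂ ∧ memDab α β d₁ d₂ ∧
        f₁ = (fun x => h₁ x + d₁ x) ∧ f₂ = (fun x => h₂ x + d₂ x)) ∧
    (∀ f₁ f₂ : ℝ → ℝ, memCab α β f₁ f₂ →
      Pone α β f₁ f₂ = f₁ ∧ Ptwo α β f₁ f₂ = f₂) ∧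
    (∀ f₁ f₂ : ℝ → ℝ, memDab α β f₁ f₂ →
      Pone α β f₁ f₂ = (fun _ => 0) ∧ Ptwo α β f₁ f₂ = (fun _ => 0)) := by
  have hg := gam_pos hα hαβ
  refine ⟨fun g₁ g₂ hC hD => ?_, fun f₁ f₂ h₁ h₂ => exists_decomposition hg h₁ h₂,
    fun f₁ f₂ h => P_on_Cab hg h, fun f₁ f₂ h => P_on_Dab hg h⟩
  obtain ⟨c₁, c₂⟩ := P_on_Cab hg hC
  obtain ⟨d₁, d₂⟩ := P_on_Dab hg hD
  exact ⟨c₁.symm.trans d₁, c₂.symm.trans d₂⟩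
end
end

section
/- Fix α, β ≥ 0 with α + β > 0. For (ψ₁,ψ₂) ∈ 𝒞 the following are equivalent: (a) (ψ₁,ψ₂) ∈ 𝒟_{α,β}; (b) the identities ψ₂^e(x) = (e_{α+β}*(β ψ₂ − α ψ₁^T))(x) + ψ₂(0)·e^{−(α+β)x} and ψ₂^e(x) = −ψ₁^e(x) hold for all x ≥ 0. -/
/-!
Write `a = α + β`, `h y = β ψ₂ y - α ψ₁ (-y)` and `F = ψ₂(0) e_a + e_a * h`, so that membership in
`𝒟_{α,β}` says `ψ₂^e = F = -ψ₁^e` on `ℝ`. Since the even parts are even, the identities on `[0, ∞)`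
extend to `ℝ` once `F` is known to be even. Now `F' = -a F + h` on `ℝ`, while for `x ≥ 0` the
identities give `h x + h (-x) = 2 β ψ₂^e x - 2 α ψ₁^e x = 2 a F x`. Hence `D x = F x - F (-x)`
satisfies `D' = -a F x + h x - a F (-x) + h (-x) = a D` on `[0, ∞)` with `D 0 = 0`, so `D = 0`
(`even_of_hasDerivAt`).
-/

open Filter Topology MeasureTheory Set intervalIntegral

noncomputable section

/-- Variation of constants: `c e_a + e_a * h` solves `F' = -a F + h`. -/
lemma hasDerivAt_conv_expa_s11 (a c : ℝ) {h : ℝ → ℝ} (hc : Continuous h) (x : ℝ) :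
    HasDerivAt (fun x => c * expa a x + conv (expa a) h x)
      (-a * (c * expa a x + conv (expa a) h x) + h x) x := by
  have key : ∀ x, c * expa a x + conv (expa a) h x
      = Real.exp (-(a * x)) * (c + ∫ y in (0:ℝ)..x, Real.exp (a * y) * h y) := by
    intro x
    have : conv (expa a) h x
        = Real.exp (-(a * x)) * ∫ y in (0:ℝ)..x, Real.exp (a * y) * h y := by
      unfold conv expa
      rw [← intervalIntegral.integral_const_mul]
      congr 1
      ext y
      rw [← mul_assoc, ← Real.exp_add]
      congr 2
      ring
    rw [this]
    unfold expa
    ring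
  have hcont : Continuous (fun y => Real.exp (a * y) * h y) := by fun_prop
  have hI : HasDerivAt (fun x => ∫ y in (0:ℝ)..x, Real.exp (a * y) * h y)
      (Real.exp (a * x) * h x) x :=
    intervalIntegral.integral_hasDerivAt_right (hcont.intervalIntegrable _ _)
      (hcont.stronglyMeasurableAtFilter _ _) hcont.continuousAt
  have hE : HasDerivAt (fun x => Real.exp (-(a * x))) (Real.exp (-(a * x)) * (-(a * 1))) x :=
    (((hasDerivAt_id x).const_mul a).neg).exp
  have hee : Real.exp (-(a * x)) * Real.exp (a * x) = 1 := by
    rw [← Real.exp_add]; simp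
  rw [funext key, key x]
  refine (hE.mul (hI.const_add c)).congr_deriv ?_
  linear_combination h x * hee

/-- If `F' = -a F + h` on `ℝ` and `2 a F` agrees on `[0, ∞)` with `h x + h (-x)`, then `F` is even:
`e^{-a x} (F x - F (-x))` has zero derivative on `[0, ∞)`. -/
lemma even_of_hasDerivAt {a : ℝ} {F h : ℝ → ℝ}
    (hF : ∀ x, HasDerivAt F (-a * F x + h x) x)
    (hh : ∀ x, 0 ≤ x → h x + h (-x) = 2 * a * F x) {x : ℝ} (hx : 0 ≤ x) :
    F x = F (-x) := by
  have hK : ∀ t, 0 ≤ t →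
      HasDerivAt (fun t => Real.exp (-(a * t)) * (F t - F (-t))) 0 t := by
    intro t ht
    have hE : HasDerivAt (fun x => Real.exp (-(a * x))) (Real.exp (-(a * t)) * (-(a * 1))) t :=
      (((hasDerivAt_id t).const_mul a).neg).exp
    have hN : HasDerivAt (fun x => F (-x)) ((-a * F (-t) + h (-t)) * (-1)) t :=
      (hF (-t)).comp t (hasDerivAt_neg t)
    refine (hE.mul ((hF t).sub hN)).congr_deriv ?_
    simp only [Pi.sub_apply]
    linear_combination Real.exp (-(a * t)) * hh t ht
  have hconst := constant_of_has_deriv_right_zero (a := 0) (b := x)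
    (f := fun t => Real.exp (-(a * t)) * (F t - F (-t)))
    (fun t ht => (hK t ht.1).continuousAt.continuousWithinAt)
    (fun t ht => (hK t ht.1).hasDerivWithinAt) x ⟨hx, le_rfl⟩
  have h0 : Real.exp (-(a * x)) * (F x - F (-x)) = 0 := by simpa using hconst
  exact sub_eq_zero.mp ((mul_eq_zero.mp h0).resolve_left (Real.exp_ne_zero _))

/-- membership in `𝒟_{α,β}` is equivalent to the two identities holding
merely on `ℝ⁺`. -/
theorem statement11 (α β : ℝ) (hα : 0 ≤ α) (hβ : 0 ≤ β) (hαβ : 0 < α + β)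
    (ψ₁ ψ₂ : ℝ → ℝ) (h₁ : Cinf ψ₁) (h₂ : Cinf ψ₂) :
    memDab α β ψ₁ ψ₂ ↔
    (∀ x : ℝ, 0 ≤ x →
      (evenPart ψ₂ x =
        conv (expa (α + β)) (fun y => β * ψ₂ y - α * ψ₁ (-y)) x + ψ₂ 0 * expa (α + β) x) ∧
      evenPart ψ₂ x = -evenPart ψ₁ x) := by
  constructor
  · rintro ⟨-, -, hg₁, hg₂⟩ x -
    have e₁ := hg₁ x
    have e₂ := hg₂ x
    constructor <;> linarith
  · intro H
    have hcont : Continuous (fun y => β * ψ₂ y - α * ψ₁ (-y)) := by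
      have := h₁.1
      have := h₂.1
      fun_prop
    have heven : ∀ (f : ℝ → ℝ) (x : ℝ), evenPart f (-x) = evenPart f x := by
      intro f x
      simp only [evenPart, neg_neg]
      ring
    have hsym := fun x (hx : 0 ≤ x) =>
      even_of_hasDerivAt (x := x) (hasDerivAt_conv_expa_s11 (α + β) (ψ₂ 0) hcont) (by
        intro t ht
        obtain ⟨e₁, e₂⟩ := H t ht
        simp only [neg_neg]
        rw [add_comm (ψ₂ 0 * _), ← e₁]
        simp only [evenPart] at e₂ ⊢
        linear_combination (-2 * α) * e₂) hx
    have hall : ∀ x, evenPart ψ₂ x = ψ₂ 0 * expa (α + β) x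
        + conv (expa (α + β)) (fun y => β * ψ₂ y - α * ψ₁ (-y)) x ∧
        evenPart ψ₂ x = -evenPart ψ₁ x := by
      intro x
      rcases le_total 0 x with hx | hx
      · obtain ⟨e₁, e₂⟩ := H x hx
        exact ⟨by linarith, e₂⟩
      · have hx' : 0 ≤ -x := by linarith
        obtain ⟨e₁, e₂⟩ := H (-x) hx'
        have e₃ := hsym (-x) hx'
        rw [heven] at e₁ e₂
        rw [heven] at e₂
        simp only [neg_neg] at e₃
        exact ⟨by linarith, e₂⟩
    refine ⟨h₁, h₂, fun x => ?_, fun x => (hall x).1⟩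
    obtain ⟨e₁, e₂⟩ := hall x
    linarith
end
end
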